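/- arXiv:2506.23965 — 2 statements merged into one kernel-verified Lean document; each statement's English description precedes it below -/
import Mathlib

section
/- There exists an infinite, locally finite tree that does not satisfy the neighbour sum property. -/
/-- A locally finite simple graph satisfies the *neighbour sum property* if there is a
function `f : V → ℝ`, not identically zero, mapping every vertex to the sum of the
values taken by its neighbours. -/
def SimpleGraph.HasNSP {V : Type*} (G : SimpleGraph V) : Prop :=
  ∃ f : V → ℝ, f ≠ 0 ∧ ∀ x : V, f x = ∑ᶠ y ∈ G.neighborSet x, f y

/-!
Attach to every vertex `x` of a graph `G` a pendant path `x - a - b`. If `f` satisfies the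
neighbour sum equations, the equation at the leaf `b` gives `f b = f a`, and the equation at `a`
gives `f a = f x + f b`, so that `f x = 0`. Hence `f` vanishes on `G`, the equation at `x` reduces
to `0 = f a`, and `f = 0`. Attaching paths to a tree yields a tree, so that taking `G` to be an
infinite ray gives the required example.
-/

open SimpleGraph

section Trees

variable {V W : Type*} {G : SimpleGraph V} {H : SimpleGraph W} {α : Type*} [LinearOrder α]

lemma reachable_map_of_forall_adj {f : V → W} {u v : V}
    (hf : ∀ ⦃x y⦄, G.Adj x y → H.Reachable (f x) (f y)) (h : G.Reachable u v) :
    H.Reachable (f u) (f v) := by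
  obtain ⟨p⟩ := h
  induction p with
  | nil => rfl
  | cons hadj _ ih => exact (hf hadj).trans ih

lemma isBridge_hasse_of_covBy {a b : α} (hab : a ⋖ b) : (hasse α).IsBridge s(a, b) := by
  have le_of_adj {x y : α} (h : ((hasse α).deleteEdges {s(a, b)}).Adj x y) (hx : x ≤ a) :
      y ≤ a := by
    obtain ⟨hxy | hyx, hne⟩ := deleteEdges_adj.1 h
    · by_contra! hy
      obtain rfl : x = a := hx.antisymm (hxy.le_of_lt hy)
      obtain rfl : y = b := hxy.unique_right hab
      exact hne rfl
    · exact hyx.le.trans hx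
  intro hreach
  -- Being `≤ a` is constant on components: it is a map to the edgeless graph on `Prop`.
  have hle : (a ≤ a) = (b ≤ a) := reachable_bot.1 <|
    reachable_map_of_forall_adj (f := (· ≤ a))
      (fun _ _ h => reachable_bot.2 (propext ⟨le_of_adj h, le_of_adj h.symm⟩)) hreach
  exact (hle.mp le_rfl).not_gt hab.lt

variable (α) in
lemma isAcyclic_hasse : (hasse α).IsAcyclic := by
  refine isAcyclic_iff_forall_adj_isBridge.2 fun a b hab => ?_
  rcases hab with hab | hba
  · exact isBridge_hasse_of_covBy hab
  · rw [Sym2.eq_swap]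
    exact isBridge_hasse_of_covBy hba

variable (α) in
lemma isTree_hasse [Nonempty α] [SuccOrder α] [IsSuccArchimedean α] : (hasse α).IsTree where
  preconnected := hasse_preconnected_of_succ α
  nonempty := inferInstance
  isAcyclic := isAcyclic_hasse α

lemma finite_neighborSet_hasse (a : α) : ((hasse α).neighborSet a).Finite := by
  have hsucc : {b | a ⋖ b}.Subsingleton := fun _ hb _ hc => CovBy.unique_right hb hc
  have hpred : {b | b ⋖ a}.Subsingleton := fun _ hb _ hc => CovBy.unique_left hb hc
  exact hsucc.finite.union hpred.finite

end Trees

section RootedProduct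

variable {V W : Type*}

/-- The *rooted product* of `G` with the graph `H` rooted at `r`: a copy of `H` is attached to
every vertex `v` of `G`, with its root identified with `v`. The vertex `w` of the copy attached to
`v` is encoded as `(v, w)`, so that `(v, r)` is the vertex `v` of `G`. -/
def rootedProduct (G : SimpleGraph V) (H : SimpleGraph W) (r : W) : SimpleGraph (V × W) where
  Adj p q := (p.1 = q.1 ∧ H.Adj p.2 q.2) ∨ (G.Adj p.1 q.1 ∧ p.2 = r ∧ q.2 = r)
  symm := ⟨fun _ _ h => h.imp (fun h => ⟨h.1.symm, h.2.symm⟩) fun h => ⟨h.1.symm, h.2.2, h.2.1⟩⟩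
  loopless := ⟨fun _ h => h.elim (fun h => h.2.ne rfl) fun h => h.1.ne rfl⟩

variable {G : SimpleGraph V} {H : SimpleGraph W} {r : W}

lemma rootedProduct_adj {p q : V × W} :
    (rootedProduct G H r).Adj p q ↔
      (p.1 = q.1 ∧ H.Adj p.2 q.2) ∨ (G.Adj p.1 q.1 ∧ p.2 = r ∧ q.2 = r) :=
  Iff.rfl

lemma finite_neighborSet_rootedProduct {p : V × W} (hG : (G.neighborSet p.1).Finite)
    (hH : (H.neighborSet p.2).Finite) : ((rootedProduct G H r).neighborSet p).Finite := by
  refine ((hH.image (Prod.mk p.1)).union (hG.image (·, r))).subset ?_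
  rintro ⟨v, w⟩ (⟨rfl, hw⟩ | ⟨hv, -, rfl⟩)
  · exact Or.inl ⟨w, hw, rfl⟩
  · exact Or.inr ⟨v, hv, rfl⟩

lemma preconnected_rootedProduct (hG : G.Preconnected) (hH : H.Preconnected) :
    (rootedProduct G H r).Preconnected := by
  have fibre (v : V) (w w' : W) : (rootedProduct G H r).Reachable (v, w) (v, w') :=
    reachable_map_of_forall_adj (f := Prod.mk v)
      (fun _ _ h => Adj.reachable (Or.inl ⟨rfl, h⟩)) (hH w w')
  have spine (v v' : V) : (rootedProduct G H r).Reachable (v, r) (v', r) :=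
    reachable_map_of_forall_adj (f := (·, r))
      (fun _ _ h => Adj.reachable (Or.inr ⟨h, rfl, rfl⟩)) (hG v v')
  rintro ⟨v, w⟩ ⟨v', w'⟩
  exact ((fibre v w r).trans (spine v v')).trans (fibre v' r w')

-- Collapsing the rest of the product to the root maps it to `H`, and the edge in question is the
-- only one lying over `s(w, w')`.
lemma isBridge_rootedProduct_fibre (v : V) {w w' : W} (h : H.IsBridge s(w, w')) :
    (rootedProduct G H r).IsBridge s((v, w), (v, w')) := by
  classical
  intro hreach
  let retract (p : V × W) : W := if p.1 = v then p.2 else r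
  have hadj ⦃p q : V × W⦄
      (hpq : ((rootedProduct G H r).deleteEdges {s((v, w), (v, w'))}).Adj p q) :
      (H.deleteEdges {s(w, w')}).Reachable (retract p) (retract q) := by
    obtain ⟨x, y⟩ := p
    obtain ⟨x', y'⟩ := q
    obtain ⟨⟨rfl : x = x', hy⟩ | ⟨-, rfl : y = r, rfl : y' = y⟩, hne⟩ := deleteEdges_adj.1 hpq
    · by_cases hx : x = v
      · subst hx
        simp only [retract, if_true]
        exact Adj.reachable (deleteEdges_adj.2 ⟨hy, fun he => hne (by simpa using he)⟩)
      · simp only [retract, if_neg hx]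
        rfl
    · simp only [retract, ite_self]
      rfl
  exact h (by simpa [retract] using reachable_map_of_forall_adj hadj hreach)

lemma isBridge_rootedProduct_spine {v v' : V} (h : G.IsBridge s(v, v')) :
    (rootedProduct G H r).IsBridge s((v, r), (v', r)) := by
  intro hreach
  refine h (reachable_map_of_forall_adj (f := Prod.fst) ?_ hreach)
  rintro ⟨x, y⟩ ⟨x', y'⟩ hpq
  obtain ⟨⟨rfl : x = x', -⟩ | ⟨hx, rfl : y = r, rfl : y' = y⟩, hne⟩ := deleteEdges_adj.1 hpq
  · rfl
  · exact Adj.reachable (deleteEdges_adj.2 ⟨hx, fun he => hne (by simpa using he)⟩)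

lemma isAcyclic_rootedProduct (hG : G.IsAcyclic) (hH : H.IsAcyclic) :
    (rootedProduct G H r).IsAcyclic := by
  rw [isAcyclic_iff_forall_adj_isBridge] at *
  rintro ⟨v, w⟩ ⟨v', w'⟩ (⟨rfl : v = v', hw⟩ | ⟨hv, rfl : w = r, rfl : w' = w⟩)
  · exact isBridge_rootedProduct_fibre v (hH hw)
  · exact isBridge_rootedProduct_spine (hG hv)

lemma isTree_rootedProduct (hG : G.IsTree) (hH : H.IsTree) : (rootedProduct G H r).IsTree where
  preconnected := preconnected_rootedProduct hG.preconnected hH.preconnected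
  nonempty := ⟨hG.nonempty.some, r⟩
  isAcyclic := isAcyclic_rootedProduct hG.isAcyclic hH.isAcyclic

end RootedProduct

section NeighborSum

variable {V W M : Type*} {G : SimpleGraph V} {H : SimpleGraph W} {r : W}

/-- The *neighbour sum equation* at the vertex `x`: the value of `f` at `x` is the sum of its
values at the neighbours of `x`. As in `SimpleGraph.HasNSP` the sum is a `finsum`, which is `0` if
`f` is nonzero at infinitely many neighbours of `x`. -/
def IsNeighborSumAt [AddCommMonoid M] (G : SimpleGraph V) (f : V → M) (x : V) : Prop :=
  f x = ∑ᶠ y ∈ G.neighborSet x, f y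

lemma isNeighborSumAt_rootedProduct_iff [AddCommMonoid M] {f : V × W → M} {v : V} {w : W}
    (hf : w = r → ∀ u, G.Adj v u → f (u, r) = 0) :
    IsNeighborSumAt (rootedProduct G H r) f (v, w) ↔ IsNeighborSumAt H (fun y => f (v, y)) w := by
  have hsum : ∑ᶠ q ∈ (rootedProduct G H r).neighborSet (v, w), f q =
      ∑ᶠ q ∈ Prod.mk v '' H.neighborSet w, f q := by
    refine finsum_mem_inter_support_eq' f _ _ ?_
    rintro ⟨u, y⟩ hq
    constructor
    · rintro (⟨rfl, hy⟩ | ⟨hu, hw, rfl : y = r⟩)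
      · exact ⟨y, hy, rfl⟩
      · exact absurd (hf hw u hu) hq
    · rintro ⟨y, hy, ⟨⟩⟩
      exact Or.inl ⟨rfl, hy⟩
  rw [IsNeighborSumAt, IsNeighborSumAt, hsum, finsum_mem_image (Prod.mk_right_injective v).injOn]

theorem not_hasNSP_rootedProduct (G : SimpleGraph V)
    (hroot : ∀ g : W → ℝ, (∀ w ≠ r, IsNeighborSumAt H g w) → g r = 0) (hH : ¬ H.HasNSP) :
    ¬ (rootedProduct G H r).HasNSP := by
  rintro ⟨f, hf0, hf⟩
  have hspine (v : V) : f (v, r) = 0 := hroot (fun w => f (v, w)) fun w hw =>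
    (isNeighborSumAt_rootedProduct_iff fun h => absurd h hw).1 (hf (v, w))
  have hfibre (v : V) (w : W) : IsNeighborSumAt H (fun y => f (v, y)) w :=
    (isNeighborSumAt_rootedProduct_iff fun _ u _ => hspine u).1 (hf (v, w))
  obtain ⟨⟨v, w⟩, hvw⟩ := Function.ne_iff.1 hf0
  exact hH ⟨fun y => f (v, y), Function.ne_iff.2 ⟨w, hvw⟩, hfibre v⟩

lemma eq_zero_of_isNeighborSumAt_pendant [AddCommGroup M] {f : V → M} {x a b : V} (hxb : x ≠ b)
    (ha : G.neighborSet a = {x, b}) (hb : G.neighborSet b = {a})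
    (hfa : IsNeighborSumAt G f a) (hfb : IsNeighborSumAt G f b) : f x = 0 := by
  rw [IsNeighborSumAt, ha, finsum_mem_pair hxb] at hfa
  rw [IsNeighborSumAt, hb, finsum_mem_singleton] at hfb
  rwa [hfb, right_eq_add] at hfa

end NeighborSum

section PathGraph

lemma neighborSet_pathGraph_three_zero : (pathGraph 3).neighborSet 0 = {1} := by
  ext w; fin_cases w <;> simp [pathGraph_adj]

lemma neighborSet_pathGraph_three_one : (pathGraph 3).neighborSet 1 = {0, 2} := by
  ext w; fin_cases w <;> simp [pathGraph_adj]

lemma neighborSet_pathGraph_three_two : (pathGraph 3).neighborSet 2 = {1} := by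
  ext w; fin_cases w <;> simp [pathGraph_adj]

lemma eq_zero_of_isNeighborSumAt_pathGraph_three {M : Type*} [AddCommGroup M] {g : Fin 3 → M}
    (hg : ∀ w ≠ 0, IsNeighborSumAt (pathGraph 3) g w) : g 0 = 0 :=
  eq_zero_of_isNeighborSumAt_pendant (by decide) neighborSet_pathGraph_three_one
    neighborSet_pathGraph_three_two (hg 1 (by decide)) (hg 2 (by decide))

lemma not_hasNSP_pathGraph_three : ¬ (pathGraph 3).HasNSP := by
  rintro ⟨g, hg0, hg⟩
  have h0 : g 0 = 0 := eq_zero_of_isNeighborSumAt_pathGraph_three fun w _ => hg w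
  have h1 : g 0 = g 1 := by rw [hg 0, neighborSet_pathGraph_three_zero, finsum_mem_singleton]
  have h2 : g 2 = g 1 := by rw [hg 2, neighborSet_pathGraph_three_two, finsum_mem_singleton]
  refine hg0 (funext fun w => ?_)
  fin_cases w
  · exact h0
  · exact h1.symm.trans h0
  · exact (h2.trans h1.symm).trans h0

end PathGraph

/-- There exists an infinite, locally finite tree that does not satisfy the neighbour
sum property. -/
theorem exists_infinite_tree_not_hasNSP :
    ∃ (V : Type) (G : SimpleGraph V), Infinite V ∧ G.IsTree ∧
      (∀ v : V, (G.neighborSet v).Finite) ∧ ¬ G.HasNSP := by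
  refine ⟨ℕ × Fin 3, rootedProduct (hasse ℕ) (pathGraph 3) 0, inferInstance, ?_, ?_, ?_⟩
  · exact isTree_rootedProduct (isTree_hasse ℕ) (isTree_hasse (Fin 3))
  · exact fun _ => finite_neighborSet_rootedProduct (finite_neighborSet_hasse _)
      (finite_neighborSet_hasse _)
  · exact not_hasNSP_rootedProduct _ (fun _ => eq_zero_of_isNeighborSumAt_pathGraph_three)
      not_hasNSP_pathGraph_three
end

section
/- For every integer n ≥ 3, the cycle graph on n vertices satisfies the neighbour sum property if and only if 6 divides n. Equivalently, there exists a function f : ℤ/nℤ → ℝ, not identically zero, with f(i) = f(i+1) + f(i-1) for all i ∈ ℤ/nℤ, if and only if 6 divides n. -/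
/-- The cycle graph on `n` vertices: vertex set `ZMod n`, with `i` adjacent to `j` if
and only if `j = i + 1` or `i = j + 1`. -/
def cycleGraph' (n : ℕ) : SimpleGraph (ZMod n) :=
  SimpleGraph.fromRel (fun i j => j = i + 1)

/-!
The recurrence `f i = f (i + d) + f (i - d)` forces `f (i + 3 • d) = -f i`, so `f` has period
`6 • d`. If `n • d` is a period as well, then so is `gcd 6 n • d`, and unless `6 ∣ n` this makes
`3 • d` or `2 • d` a period. In the first case `f i = -f i`; in the second, `f (i + d) = -f i` and
the recurrence gives `3 • f i = 0`. Either way `f` vanishes. On `ZMod n`, `n • 1 = 0` is a period.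
Conversely, `a, a, 0, -a, -a, 0` solves the recurrence on `ZMod 6` and pulls back to `ZMod n`
when `6 ∣ n`.
-/

open Function

section Periodic

variable {G α A : Type*} [AddGroup G] {c : G}

lemma periodic_gcd_nsmul {f : G → α} {m n : ℕ} (hm : Periodic f (m • c))
    (hn : Periodic f (n • c)) : Periodic f (m.gcd n • c) := by
  have bezout : m.gcd n • c = m.gcdA n • m • c + m.gcdB n • n • c := by
    rw [← natCast_zsmul c (m.gcd n), Nat.gcd_eq_gcd_ab, add_zsmul, mul_zsmul', mul_zsmul',
      natCast_zsmul, natCast_zsmul]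
  rw [bezout]
  exact (hm.zsmul _).add_period (hn.zsmul _)

lemma eq_zero_of_antiperiodic_of_periodic [AddGroup A] [IsAddTorsionFree A] {f : G → A}
    (ha : Antiperiodic f c) (hp : Periodic f c) : f = 0 :=
  funext fun i => self_eq_neg.mp ((hp i).symm.trans (ha i))

end Periodic

/-- `f` solves the neighbour sum recurrence with step `d`: each value is the sum of the values
one step `d` ahead and one step behind. On the cycle graph on `ZMod n` the step is `1`; an arbitrary
step in an arbitrary group allows solutions to be pulled back along homomorphisms. -/
def IsNeighbourSum {G A : Type*} [AddGroup G] [Add A] (f : G → A) (d : G) : Prop :=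
  ∀ i, f i = f (i + d) + f (i - d)

namespace IsNeighbourSum

variable {G H A : Type*} [AddGroup G] [AddGroup H]

lemma comp_addMonoidHom [Add A] {f : H → A} (φ : G →+ H) {d : G}
    (h : IsNeighbourSum f (φ d)) : IsNeighbourSum (f ∘ φ) d := fun i => by
  simpa using h (φ i)

variable [AddCommGroup A] {f : G → A} {d : G}

lemma map_add_add (h : IsNeighbourSum f d) (i : G) : f (i + d + d) = f (i + d) - f i := by
  rw [h (i + d), add_sub_cancel_right, add_sub_cancel_right]

lemma antiperiodic_three_nsmul (h : IsNeighbourSum f d) : Antiperiodic f (3 • d) := fun i =>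
  calc f (i + 3 • d)
    _ = f (i + d + d + d) := by simp only [succ_nsmul, zero_nsmul, zero_add, add_assoc]
    _ = f (i + d) - f i - f (i + d) := by rw [h.map_add_add, h.map_add_add]
    _ = -f i := by abel

lemma periodic_six_nsmul (h : IsNeighbourSum f d) : Periodic f (6 • d) := by
  simpa only [← mul_nsmul'] using h.antiperiodic_three_nsmul.even_nsmul_periodic 1

variable [IsAddTorsionFree A]

lemma eq_zero_of_periodic_three_nsmul (h : IsNeighbourSum f d) (hp : Periodic f (3 • d)) :
    f = 0 :=
  eq_zero_of_antiperiodic_of_periodic h.antiperiodic_three_nsmul hp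

lemma eq_zero_of_periodic_two_nsmul (h : IsNeighbourSum f d) (hp : Periodic f (2 • d)) :
    f = 0 := by
  have anti : Antiperiodic f d := fun i => by
    rw [← hp (i + d), add_assoc, ← succ_nsmul', h.antiperiodic_three_nsmul]
  funext i
  have recurrence : f i = -f i - f i := by
    simpa only [anti (i + d), anti i, neg_neg] using h.map_add_add i
  have three_nsmul_eq_zero : 3 • f i = 0 :=
    calc 3 • f i = f i - (-f i - f i) := by abel
      _ = 0 := sub_eq_zero.mpr recurrence
  exact (nsmul_eq_zero_iff_right three_ne_zero).mp three_nsmul_eq_zero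

theorem six_dvd_of_periodic (h : IsNeighbourSum f d) (hf : f ≠ 0) {n : ℕ}
    (hp : Periodic f (n • d)) : 6 ∣ n := by
  have hgcd : Periodic f (Nat.gcd 6 n • d) := periodic_gcd_nsmul h.periodic_six_nsmul hp
  have periodic_of_dvd {k : ℕ} (hk : Nat.gcd 6 n ∣ k) : Periodic f (k • d) := by
    obtain ⟨m, rfl⟩ := hk
    rw [mul_nsmul]
    exact hgcd.nsmul m
  have hdvd : Nat.gcd 6 n ∣ 6 := Nat.gcd_dvd_left 6 n
  have gcd_cases : Nat.gcd 6 n ∣ 2 ∨ Nat.gcd 6 n ∣ 3 ∨ Nat.gcd 6 n = 6 := by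
    have hle : Nat.gcd 6 n ≤ 6 := Nat.le_of_dvd (by decide) hdvd
    interval_cases Nat.gcd 6 n <;> omega
  rcases gcd_cases with dvd_two | dvd_three | eq_six
  · exact absurd (h.eq_zero_of_periodic_two_nsmul (periodic_of_dvd dvd_two)) hf
  · exact absurd (h.eq_zero_of_periodic_three_nsmul (periodic_of_dvd dvd_three)) hf
  · exact Nat.gcd_eq_left_iff_dvd.mp eq_six

end IsNeighbourSum

/-- The 6-periodic solution of the neighbour sum recurrence that takes the value `a` at `0` and `1`,
from which solutions on `ZMod n` are pulled back when `6 ∣ n`. It is written as a vector, `ZMod 6`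
being `Fin 6` by definition. -/
def hexagonSolution {A : Type*} [AddGroup A] (a : A) : ZMod 6 → A :=
  ![a, a, 0, -a, -a, 0]

lemma isNeighbourSum_hexagonSolution {A : Type*} [AddGroup A] (a : A) :
    IsNeighbourSum (hexagonSolution a) 1 := by
  intro i
  fin_cases i
  exacts [(add_zero a).symm, (zero_add a).symm, (neg_add_cancel a).symm,
    (add_zero (-a)).symm, (zero_add (-a)).symm, (add_neg_cancel a).symm]

theorem exists_isNeighbourSum_one_iff {A : Type*} [AddCommGroup A] [IsAddTorsionFree A]
    [Nontrivial A] {n : ℕ} :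
    (∃ f : ZMod n → A, f ≠ 0 ∧ IsNeighbourSum f 1) ↔ 6 ∣ n := by
  constructor
  · rintro ⟨f, hf, h⟩
    have periodic_n : Periodic f (n • 1) := by
      rw [nsmul_one, ZMod.natCast_self]
      exact periodic_with_period_zero f
    exact h.six_dvd_of_periodic hf periodic_n
  · intro hn
    obtain ⟨a, ha⟩ := exists_ne (0 : A)
    let φ : ZMod n →+ ZMod 6 := (ZMod.castHom hn (ZMod 6)).toAddMonoidHom
    have map_one : φ 1 = 1 := (ZMod.castHom hn (ZMod 6)).map_one
    refine ⟨hexagonSolution a ∘ φ, fun h => ha ?_, .comp_addMonoidHom φ ?_⟩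
    · have value_at_zero : hexagonSolution a (φ 0) = 0 := congrFun h 0
      rwa [map_zero] at value_at_zero
    · rw [map_one]
      exact isNeighbourSum_hexagonSolution a

lemma neighborSet_cycleGraph' {n : ℕ} (hn : n ≠ 1) (x : ZMod n) :
    (cycleGraph' n).neighborSet x = {x + 1, x - 1} := by
  have : Nontrivial (ZMod n) := ZMod.nontrivial_iff.mpr hn
  ext y
  have adj_iff : (cycleGraph' n).Adj x y ↔ x ≠ y ∧ (y = x + 1 ∨ x = y + 1) :=
    SimpleGraph.fromRel_adj _ x y
  rw [SimpleGraph.mem_neighborSet, adj_iff, Set.mem_insert_iff, Set.mem_singleton_iff,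
    eq_sub_iff_add_eq, eq_comm (a := x) (b := y + 1), and_iff_right_iff_imp]
  rintro (rfl | rfl) <;> simp

lemma finsum_neighborSet_cycleGraph' {M : Type*} [AddCommMonoid M] {n : ℕ} (hn : ¬ n ∣ 2)
    (f : ZMod n → M) (x : ZMod n) :
    ∑ᶠ y ∈ (cycleGraph' n).neighborSet x, f y = f (x + 1) + f (x - 1) := by
  have ne_one : n ≠ 1 := by
    rintro rfl
    exact hn (one_dvd 2)
  have add_one_ne_sub_one : x + 1 ≠ x - 1 := fun h => hn <| by
    rw [← ZMod.natCast_eq_zero_iff]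
    linear_combination h
  rw [neighborSet_cycleGraph' ne_one, finsum_mem_pair add_one_ne_sub_one]

theorem hasNSP_cycleGraph'_iff {n : ℕ} (hn : ¬ n ∣ 2) :
    (cycleGraph' n).HasNSP ↔ ∃ f : ZMod n → ℝ, f ≠ 0 ∧ IsNeighbourSum f 1 := by
  simp only [SimpleGraph.HasNSP, finsum_neighborSet_cycleGraph' hn, IsNeighbourSum]

/-- For every `n ≥ 3`, the cycle graph on `n` vertices satisfies the neighbour sum
property if and only if `6 ∣ n`; equivalently, there is a not-identically-zero
`f : ℤ/nℤ → ℝ` with `f i = f (i+1) + f (i-1)` for all `i` if and only if `6 ∣ n`. -/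
theorem cycleGraph_hasNSP_iff (n : ℕ) (hn : 3 ≤ n) :
    ((cycleGraph' n).HasNSP ↔ 6 ∣ n) ∧
    ((∃ f : ZMod n → ℝ, f ≠ 0 ∧ ∀ i : ZMod n, f i = f (i + 1) + f (i - 1)) ↔
      6 ∣ n) := by
  have not_dvd_two : ¬ n ∣ 2 := Nat.not_dvd_of_pos_of_lt two_pos hn
  exact ⟨(hasNSP_cycleGraph'_iff not_dvd_two).trans exists_isNeighbourSum_one_iff,
    exists_isNeighbourSum_one_iff⟩
end
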